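/- Assume (H2). There exists a constant C > 0, depending only on a₀ and C₀, such that for all (x,t) ∈ K: |Ã₁(x,t) - A₁⁰(x,t)| ≤ C ε₀² e^{-t₀} b(x₀, e^{t₀}). -/

import Mathlib

open MeasureTheory Real Filter

noncomputable section

/-- The upper half-plane ℍ as a subset of ℝ². -/
def UHP : Set (ℝ × ℝ) := {p : ℝ × ℝ | 0 < p.2}

/-- The hyperbolic measure `dv = y⁻² dx dy` on ℍ. -/
def volH : Measure (ℝ × ℝ) :=
  (volume.restrict UHP).withDensity fun p => ENNReal.ofReal ((p.2 ^ 2)⁻¹)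

/-- x-derivative of a complex function on ℝ². -/
def dX (f : ℝ × ℝ → ℂ) (p : ℝ × ℝ) : ℂ := fderiv ℝ f p (1, 0)

/-- y-derivative of a complex function on ℝ². -/
def dY (f : ℝ × ℝ → ℂ) (p : ℝ × ℝ) : ℂ := fderiv ℝ f p (0, 1)

/-- x-derivative of a real function on ℝ². -/
def dXr (f : ℝ × ℝ → ℝ) (p : ℝ × ℝ) : ℝ := fderiv ℝ f p (1, 0)

/-- y-derivative of a real function on ℝ². -/
def dYr (f : ℝ × ℝ → ℝ) (p : ℝ × ℝ) : ℝ := fderiv ℝ f p (0, 1)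

/-- The magnetic field `b̃ = y² (∂ₓA₂ - ∂_yA₁)`. -/
def fieldB (A₁ A₂ : ℝ × ℝ → ℝ) (p : ℝ × ℝ) : ℝ := p.2 ^ 2 * (dXr A₂ p - dYr A₁ p)

/-- The magnetic intensity `b = |b̃|`. -/
def intenB (A₁ A₂ : ℝ × ℝ → ℝ) (p : ℝ × ℝ) : ℝ := |fieldB A₁ A₂ p|

/-- Smooth compactly supported test functions with support inside a set `Ω`. -/
def IsTestOn (Ω : Set (ℝ × ℝ)) (f : ℝ × ℝ → ℂ) : Prop :=
  ContDiff ℝ (⊤ : ℕ∞) f ∧ HasCompactSupport f ∧ tsupport f ⊆ Ω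

/-- The quadratic form of the magnetic Laplacian on ℍ. -/
def qA (A₁ A₂ : ℝ × ℝ → ℝ) (f : ℝ × ℝ → ℂ) : ℝ :=
  ∫ p, p.2 ^ 2 * (‖-Complex.I * dX f p - (A₁ p : ℂ) * f p‖ ^ 2 +
    ‖-Complex.I * dY f p - (A₂ p : ℂ) * f p‖ ^ 2) ∂volH

/-- hyperbolic distance from `(x,y)` to `(0,1)`. -/
def hDist (p : ℝ × ℝ) : ℝ :=
  2 * Real.arsinh (Real.sqrt (p.1 ^ 2 + (p.2 - 1) ^ 2) / (2 * Real.sqrt p.2))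

/-- (H1) : the magnetic intensity tends to +∞ at infinity. -/
def H1 (A₁ A₂ : ℝ × ℝ → ℝ) : Prop :=
  ∀ M : ℝ, ∃ R : ℝ, ∀ p ∈ UHP, R ≤ hDist p → M ≤ intenB A₁ A₂ p

/-- (H2) : control of the derivative of the magnetic field. -/
def H2 (C₀ : ℝ) (A₁ A₂ : ℝ × ℝ → ℝ) : Prop :=
  ∀ p ∈ UHP, p.2 * Real.sqrt ((dXr (fieldB A₁ A₂) p) ^ 2 + (dYr (fieldB A₁ A₂) p) ^ 2)
    ≤ C₀ * (intenB A₁ A₂ p + 1)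

/-- Counting function of a quadratic form `q` with form domain `dom` and squared
norm `nsq`, via Glazman's lemma. -/
def NN (q : (ℝ × ℝ → ℂ) → ℝ) (dom : Set (ℝ × ℝ → ℂ)) (nsq : (ℝ × ℝ → ℂ) → ℝ)
    (lam : ℝ) : ℕ :=
  sSup {n : ℕ | ∃ V : Submodule ℂ (ℝ × ℝ → ℂ), (V : Set (ℝ × ℝ → ℂ)) ⊆ dom ∧
    Module.finrank ℂ V = n ∧ ∀ u ∈ V, u ≠ 0 → q u < lam * nsq u}

/-- Heaviside function `[ρ]₊⁰`. -/
def heav (ρ : ℝ) : ℝ := if 0 < ρ then 1 else 0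


/-- The rectangle `K = X₀ + K₀` with `K₀ = (-ε₀ a e^{t₀}/2, ε₀ a e^{t₀}/2) × (-ε₀/2, ε₀/2)`. -/
def Krect (x₀ t₀ a ε₀ : ℝ) : Set (ℝ × ℝ) :=
  Set.Ioo (x₀ - ε₀ * a * Real.exp t₀ / 2) (x₀ + ε₀ * a * Real.exp t₀ / 2) ×ˢ
    Set.Ioo (t₀ - ε₀ / 2) (t₀ + ε₀ / 2)

/-- `Ã₁(x,t) = -∫_{e^{t₀}}^{e^t} b̃(x,s) s⁻² ds`. -/
def Atil (A₁ A₂ : ℝ × ℝ → ℝ) (t₀ : ℝ) (p : ℝ × ℝ) : ℝ :=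
  -∫ s in Real.exp t₀..Real.exp p.2, fieldB A₁ A₂ (p.1, s) / s ^ 2

/-- `A₁⁰(x,t) = -(t - t₀) e^{-t₀} b̃₀`. -/
def Azero (t₀ b₀ : ℝ) (p : ℝ × ℝ) : ℝ := -(p.2 - t₀) * Real.exp (-t₀) * b₀

/-- The Dirichlet form `q̂^Ã_K`. -/
def qhatK (A₁ A₂ : ℝ × ℝ → ℝ) (x₀ t₀ a ε₀ : ℝ) (w : ℝ × ℝ → ℂ) : ℝ :=
  ∫ p in Krect x₀ t₀ a ε₀,
    (Real.exp (2 * p.2) * ‖-Complex.I * dX w p - (Atil A₁ A₂ t₀ p : ℂ) * w p‖ ^ 2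
      + ‖dY w p‖ ^ 2 + (1/4) * ‖w p‖ ^ 2)

/-- The Dirichlet form `q̂^{Ã,0}_K` (with frozen factor `e^{2t₀}`). -/
def qhatK0 (A₁ A₂ : ℝ × ℝ → ℝ) (x₀ t₀ a ε₀ : ℝ) (w : ℝ × ℝ → ℂ) : ℝ :=
  ∫ p in Krect x₀ t₀ a ε₀,
    (Real.exp (2 * t₀) * ‖-Complex.I * dX w p - (Atil A₁ A₂ t₀ p : ℂ) * w p‖ ^ 2
      + ‖dY w p‖ ^ 2 + (1/4) * ‖w p‖ ^ 2)

/-- The Dirichlet form `q^{A⁰,0}_K` of the frozen constant magnetic field `b̃₀`. -/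
def qK0 (x₀ t₀ a ε₀ b₀ : ℝ) (w : ℝ × ℝ → ℂ) : ℝ :=
  ∫ p in Krect x₀ t₀ a ε₀,
    (Real.exp (2 * t₀) * ‖-Complex.I * dX w p - (Azero t₀ b₀ p : ℂ) * w p‖ ^ 2
      + ‖dY w p‖ ^ 2 + (1/4) * ‖w p‖ ^ 2)


/-!
Substituting `s = e^τ` gives `Ã₁(x,t) = -∫_{t₀}^t b̃(x,e^τ) e^{-τ} dτ`, while `A₁⁰(x,t)` is the same
integral with the integrand frozen at `(x₀,t₀)`. In the coordinates `(x,τ)`, (H2) says that `b̃`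
varies at rate at most `C₀ (|b̃| + 1)` in hyperbolic length. The rectangle `K` has hyperbolic size
`O(ε₀)`, so by Grönwall's inequality on the segment from `(x₀,t₀)` the integrand moves by
`O(ε₀ e^{-t₀} (b(x₀,e^{t₀}) + 1))`. The length `|t - t₀| ≤ ε₀ / 2` of the interval of integration
contributes the second factor `ε₀`.
-/

section Gronwall

variable {E F : Type*} [NormedAddCommGroup E] [NormedSpace ℝ E]
  [NormedAddCommGroup F] [NormedSpace ℝ F]

lemma gronwallBound_zero_mul (K c x : ℝ) :
    gronwallBound 0 K (K * c) x = c * (exp (K * x) - 1) := by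
  rcases eq_or_ne K 0 with rfl | hK
  · simp [gronwallBound_K0]
  · simp [gronwallBound_of_K_ne_0 hK, mul_div_cancel_left₀ _ hK]

lemma norm_sub_le_of_norm_deriv_le_mul_norm_add {f f' : ℝ → F} {K c a b : ℝ} (hK : 0 ≤ K)
    (hab : a ≤ b) (hf : ∀ r ∈ Set.Icc a b, HasDerivAt f (f' r) r)
    (hbound : ∀ r ∈ Set.Icc a b, ‖f' r‖ ≤ K * (‖f r‖ + c)) :
    ‖f b - f a‖ ≤ (‖f a‖ + c) * (exp (K * (b - a)) - 1) := by
  rw [← gronwallBound_zero_mul]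
  refine norm_le_gronwallBound_of_norm_deriv_right_le (f := fun r ↦ f r - f a) (f' := f')
    (fun r hr ↦ ((hf r hr).sub_const _).continuousAt.continuousWithinAt)
    (fun r hr ↦ ((hf r (Set.Ico_subset_Icc_self hr)).sub_const _).hasDerivWithinAt)
    (by simp) (fun r hr ↦ ?_) b (Set.right_mem_Icc.2 hab)
  calc ‖f' r‖ ≤ K * (‖f r‖ + c) := hbound r (Set.Ico_subset_Icc_self hr)
    _ ≤ K * (‖f r - f a‖ + ‖f a‖ + c) := by gcongr; exact norm_le_norm_sub_add _ _
    _ = K * ‖f r - f a‖ + K * (‖f a‖ + c) := by ring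

lemma norm_sub_le_of_norm_fderiv_segment_le_mul_norm_add {f : E → F} {p q : E} {K c : ℝ}
    (hK : 0 ≤ K) (hf : ∀ z ∈ segment ℝ p q, DifferentiableAt ℝ f z)
    (hbound : ∀ z ∈ segment ℝ p q, ‖fderiv ℝ f z (q - p)‖ ≤ K * (‖f z‖ + c)) :
    ‖f q - f p‖ ≤ (‖f p‖ + c) * (exp K - 1) := by
  have hmem (r : ℝ) (hr : r ∈ Set.Icc 0 1) : AffineMap.lineMap p q r ∈ segment ℝ p q :=
    segment_eq_image_lineMap ℝ p q ▸ Set.mem_image_of_mem _ hr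
  simpa using norm_sub_le_of_norm_deriv_le_mul_norm_add
    (f := f ∘ AffineMap.lineMap p q) hK zero_le_one
    (fun r hr ↦ (hf _ (hmem r hr)).hasFDerivAt.comp_hasDerivAt r AffineMap.hasDerivAt_lineMap)
    (fun r hr ↦ hbound _ (hmem r hr))

end Gronwall

lemma exp_mul_sub_one_le_mul {θ : ℝ} (hθ₀ : 0 ≤ θ) (hθ₁ : θ ≤ 1) (x : ℝ) :
    exp (x * θ) - 1 ≤ θ * (exp x - 1) := by
  have hconvex := convexOn_exp.2 (Set.mem_univ x) (Set.mem_univ 0) hθ₀ (sub_nonneg.2 hθ₁)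
    (add_sub_cancel θ 1)
  simp only [smul_eq_mul, mul_zero, add_zero, exp_zero, mul_one] at hconvex
  rw [mul_comm x]
  linarith

lemma abs_exp_neg_sub_exp_neg_le {s t : ℝ} (h : |t - s| ≤ 1) :
    |exp (-t) - exp (-s)| ≤ 2 * |t - s| * exp (-s) := by
  have hfactor : exp (-t) - exp (-s) = (exp (s - t) - 1) * exp (-s) := by
    rw [sub_mul, ← exp_add]
    ring_nf
  rw [hfactor, abs_mul, abs_of_pos (exp_pos (-s)), abs_sub_comm t s]
  gcongr
  exact abs_exp_sub_one_le (abs_sub_comm t s ▸ h)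

section Krect

variable {x₀ t₀ a ε₀ : ℝ} {p : ℝ × ℝ}

lemma convex_Krect : Convex ℝ (Krect x₀ t₀ a ε₀) :=
  (convex_Ioo _ _).prod (convex_Ioo _ _)

lemma mem_Krect_iff :
    p ∈ Krect x₀ t₀ a ε₀ ↔ |p.1 - x₀| < ε₀ * a * exp t₀ / 2 ∧ |p.2 - t₀| < ε₀ / 2 := by
  simp only [Krect, Set.mem_prod, ← Real.ball_eq_Ioo, Metric.mem_ball, Real.dist_eq]

lemma center_mem_Krect (hp : p ∈ Krect x₀ t₀ a ε₀) : (x₀, t₀) ∈ Krect x₀ t₀ a ε₀ := by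
  obtain ⟨hx, ht⟩ := mem_Krect_iff.1 hp
  simpa only [mem_Krect_iff, sub_self, abs_zero] using
    And.intro ((abs_nonneg _).trans_lt hx) ((abs_nonneg _).trans_lt ht)

lemma epsilon_pos_of_mem_Krect (hp : p ∈ Krect x₀ t₀ a ε₀) : 0 < ε₀ := by
  linarith [(abs_nonneg _).trans_lt (mem_Krect_iff.1 hp).2]

lemma width_pos_of_mem_Krect (hp : p ∈ Krect x₀ t₀ a ε₀) : 0 < a := by
  have hprod : 0 < ε₀ * a * exp t₀ := by
    linarith [(abs_nonneg _).trans_lt (mem_Krect_iff.1 hp).1]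
  exact pos_of_mul_pos_right (pos_of_mul_pos_left hprod (exp_pos t₀).le)
    (epsilon_pos_of_mem_Krect hp).le

lemma abs_exp_neg_sub_exp_neg_le_of_mem_Krect (hε₀ : ε₀ ≤ 1) (hp : p ∈ Krect x₀ t₀ a ε₀) :
    |exp (-p.2) - exp (-t₀)| ≤ ε₀ * exp (-t₀) := by
  have ht := (mem_Krect_iff.1 hp).2
  refine (abs_exp_neg_sub_exp_neg_le (by linarith)).trans ?_
  gcongr
  linarith

lemma exp_neg_le_of_mem_Krect (hε₀ : ε₀ ≤ 1) (hp : p ∈ Krect x₀ t₀ a ε₀) :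
    exp (-p.2) ≤ 2 * exp (-t₀) := by
  have hdiff := (abs_le.1 (abs_exp_neg_sub_exp_neg_le_of_mem_Krect hε₀ hp)).2
  have hmul : ε₀ * exp (-t₀) ≤ 1 * exp (-t₀) := by gcongr
  linarith

lemma exp_neg_mul_abs_add_abs_le_of_mem_Krect {z : ℝ × ℝ} (hε₀ : ε₀ ≤ 1)
    (hz : z ∈ Krect x₀ t₀ a ε₀) (hp : p ∈ Krect x₀ t₀ a ε₀) :
    exp (-z.2) * |p.1 - x₀| + |p.2 - t₀| ≤ (a + 1) * ε₀ := by
  obtain ⟨hx, ht⟩ := mem_Krect_iff.1 hp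
  have hε₀_pos := epsilon_pos_of_mem_Krect hp
  calc exp (-z.2) * |p.1 - x₀| + |p.2 - t₀|
      ≤ 2 * exp (-t₀) * (ε₀ * a * exp t₀ / 2) + ε₀ / 2 := by
        gcongr
        exact exp_neg_le_of_mem_Krect hε₀ hz
    _ = ε₀ * a + ε₀ / 2 := by
        rw [exp_neg]
        field_simp
    _ ≤ (a + 1) * ε₀ := by linarith

end Krect

/-- The parametrisation `(x, t) ↦ (x, e^t)` of the upper half-plane by `ℝ²`, in which the
rectangles `Krect` live. -/
def logChart (p : ℝ × ℝ) : ℝ × ℝ := (p.1, exp p.2)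

lemma logChart_mem_UHP (p : ℝ × ℝ) : logChart p ∈ UHP := exp_pos p.2

lemma continuous_logChart : Continuous logChart := by
  unfold logChart
  fun_prop

lemma hasFDerivAt_logChart (p : ℝ × ℝ) :
    HasFDerivAt logChart
      ((ContinuousLinearMap.fst ℝ ℝ ℝ).prod (exp p.2 • ContinuousLinearMap.snd ℝ ℝ ℝ)) p :=
  hasFDerivAt_fst.prodMk hasFDerivAt_snd.exp

lemma isOpen_UHP : IsOpen UHP := isOpen_lt continuous_const continuous_snd

lemma fderiv_apply_eq_dXr_add_dYr (f : ℝ × ℝ → ℝ) (p v : ℝ × ℝ) :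
    fderiv ℝ f p v = v.1 * dXr f p + v.2 * dYr f p := by
  have hv : v = v.1 • ((1, 0) : ℝ × ℝ) + v.2 • ((0, 1) : ℝ × ℝ) := by simp
  conv_lhs => rw [hv, map_add, map_smul, map_smul]
  rfl

lemma fderiv_comp_logChart_apply {f : ℝ × ℝ → ℝ} {p : ℝ × ℝ}
    (hf : DifferentiableAt ℝ f (logChart p)) (v : ℝ × ℝ) :
    fderiv ℝ (f ∘ logChart) p v =
      v.1 * dXr f (logChart p) + exp p.2 * v.2 * dYr f (logChart p) := by
  rw [(hf.hasFDerivAt.comp p (hasFDerivAt_logChart p)).fderiv]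
  exact fderiv_apply_eq_dXr_add_dYr f _ _

section Field

variable {A₁ A₂ : ℝ × ℝ → ℝ} {C₀ : ℝ}

lemma contDiffOn_fieldB {n : WithTop ℕ∞} (hA₁ : ContDiffOn ℝ (n + 1) A₁ UHP)
    (hA₂ : ContDiffOn ℝ (n + 1) A₂ UHP) : ContDiffOn ℝ n (fieldB A₁ A₂) UHP :=
  (contDiff_snd.contDiffOn.pow 2).mul
    (((hA₂.fderiv_of_isOpen isOpen_UHP le_rfl).clm_apply contDiffOn_const).sub
      ((hA₁.fderiv_of_isOpen isOpen_UHP le_rfl).clm_apply contDiffOn_const))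

lemma H2.nonneg (hH2 : H2 C₀ A₁ A₂) : 0 ≤ C₀ := by
  have hbound := hH2 (logChart 0) (logChart_mem_UHP 0)
  have hlhs := mul_nonneg (logChart_mem_UHP 0).le (Real.sqrt_nonneg
    ((dXr (fieldB A₁ A₂) (logChart 0)) ^ 2 + (dYr (fieldB A₁ A₂) (logChart 0)) ^ 2))
  have hinten : 0 < intenB A₁ A₂ (logChart 0) + 1 := add_pos_of_nonneg_of_pos (abs_nonneg _) one_pos
  exact nonneg_of_mul_nonneg_left (hlhs.trans hbound) hinten

lemma H2.abs_fderiv_comp_logChart_le (hH2 : H2 C₀ A₁ A₂) {p : ℝ × ℝ}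
    (hB : DifferentiableAt ℝ (fieldB A₁ A₂) (logChart p)) (v : ℝ × ℝ) :
    |fderiv ℝ (fieldB A₁ A₂ ∘ logChart) p v| ≤
      C₀ * (exp (-p.2) * |v.1| + |v.2|) * (intenB A₁ A₂ (logChart p) + 1) := by
  set dx := dXr (fieldB A₁ A₂) (logChart p)
  set dy := dYr (fieldB A₁ A₂) (logChart p)
  set grad := √(dx ^ 2 + dy ^ 2)
  have hdx : |dx| ≤ grad := Real.abs_le_sqrt (le_add_of_nonneg_right (sq_nonneg dy))
  have hdy : |dy| ≤ grad := Real.abs_le_sqrt (le_add_of_nonneg_left (sq_nonneg dx))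
  calc |fderiv ℝ (fieldB A₁ A₂ ∘ logChart) p v|
      = |v.1 * dx + exp p.2 * v.2 * dy| := by rw [fderiv_comp_logChart_apply hB]
    _ ≤ |v.1| * |dx| + exp p.2 * |v.2| * |dy| := by
        refine (abs_add_le _ _).trans_eq ?_
        rw [abs_mul, abs_mul, abs_mul, abs_of_pos (exp_pos p.2)]
    _ ≤ |v.1| * grad + exp p.2 * |v.2| * grad := by gcongr
    _ = (exp (-p.2) * |v.1| + |v.2|) * (exp p.2 * grad) := by
        rw [exp_neg]
        field_simp
    _ ≤ (exp (-p.2) * |v.1| + |v.2|) * (C₀ * (intenB A₁ A₂ (logChart p) + 1)) :=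
        mul_le_mul_of_nonneg_left (hH2 _ (logChart_mem_UHP p)) (by positivity)
    _ = C₀ * (exp (-p.2) * |v.1| + |v.2|) * (intenB A₁ A₂ (logChart p) + 1) := by ring

lemma Atil_eq_neg_integral_comp_logChart (hB : ContinuousOn (fieldB A₁ A₂) UHP) (t₀ : ℝ)
    (p : ℝ × ℝ) :
    Atil A₁ A₂ t₀ p = -∫ τ in t₀..p.2, fieldB A₁ A₂ (logChart (p.1, τ)) * exp (-τ) := by
  have hcont : ContinuousOn (fun s ↦ fieldB A₁ A₂ (p.1, s) / s ^ 2)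
      (exp '' Set.uIcc t₀ p.2) := by
    have hpos : ∀ s ∈ exp '' Set.uIcc t₀ p.2, 0 < s := Set.forall_mem_image.2 fun τ _ ↦ exp_pos τ
    exact (hB.comp (by fun_prop) fun s hs ↦ hpos s hs).div (by fun_prop)
      fun s hs ↦ pow_ne_zero 2 (hpos s hs).ne'
  rw [Atil, ← intervalIntegral.integral_comp_mul_deriv' (fun τ _ ↦ hasDerivAt_exp τ)
    continuousOn_exp hcont]
  congr 2 with τ
  simp only [Function.comp_apply, logChart, exp_neg]
  field_simp

variable {x₀ t₀ a ε₀ : ℝ} {p : ℝ × ℝ}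

lemma H2.abs_fieldB_logChart_sub_le (hH2 : H2 C₀ A₁ A₂)
    (hB : DifferentiableOn ℝ (fieldB A₁ A₂) UHP) (hε₀ : ε₀ ≤ 1) (hp : p ∈ Krect x₀ t₀ a ε₀) :
    |fieldB A₁ A₂ (logChart p) - fieldB A₁ A₂ (x₀, exp t₀)| ≤
      (intenB A₁ A₂ (x₀, exp t₀) + 1) * (ε₀ * (exp (C₀ * (a + 1)) - 1)) := by
  have hC₀ := hH2.nonneg
  have hε₀_pos := epsilon_pos_of_mem_Krect hp
  have ha := width_pos_of_mem_Krect hp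
  have hB_at (z : ℝ × ℝ) : DifferentiableAt ℝ (fieldB A₁ A₂) (logChart z) :=
    hB.differentiableAt (isOpen_UHP.mem_nhds (logChart_mem_UHP z))
  have hderiv : ∀ z ∈ segment ℝ (x₀, t₀) p,
      ‖fderiv ℝ (fieldB A₁ A₂ ∘ logChart) z (p - (x₀, t₀))‖ ≤
        C₀ * (a + 1) * ε₀ * (‖(fieldB A₁ A₂ ∘ logChart) z‖ + 1) := by
    intro z hz
    have hzK := convex_Krect.segment_subset (center_mem_Krect hp) hp hz
    refine (hH2.abs_fderiv_comp_logChart_le (hB_at z) _).trans ?_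
    rw [mul_assoc C₀ (a + 1)]
    exact mul_le_mul_of_nonneg_right
      (mul_le_mul_of_nonneg_left (exp_neg_mul_abs_add_abs_le_of_mem_Krect hε₀ hzK hp) hC₀)
      (add_nonneg (abs_nonneg _) zero_le_one)
  refine (norm_sub_le_of_norm_fderiv_segment_le_mul_norm_add (by positivity)
    (fun z _ ↦ (hB_at z).comp z (hasFDerivAt_logChart z).differentiableAt) hderiv).trans ?_
  exact mul_le_mul_of_nonneg_left (exp_mul_sub_one_le_mul hε₀_pos.le hε₀ _)
    (add_nonneg (abs_nonneg _) zero_le_one)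

lemma H2.abs_fieldB_logChart_mul_exp_neg_sub_le (hH2 : H2 C₀ A₁ A₂)
    (hB : DifferentiableOn ℝ (fieldB A₁ A₂) UHP) (hε₀ : ε₀ ≤ 1) (hp : p ∈ Krect x₀ t₀ a ε₀) :
    |fieldB A₁ A₂ (logChart p) * exp (-p.2) - fieldB A₁ A₂ (x₀, exp t₀) * exp (-t₀)| ≤
      2 * exp (C₀ * (a + 1)) * ε₀ * exp (-t₀) * (intenB A₁ A₂ (x₀, exp t₀) + 1) := by
  set b₀ := fieldB A₁ A₂ (x₀, exp t₀)
  change _ ≤ 2 * exp (C₀ * (a + 1)) * ε₀ * exp (-t₀) * (|b₀| + 1)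
  have hε₀_pos := epsilon_pos_of_mem_Krect hp
  calc |fieldB A₁ A₂ (logChart p) * exp (-p.2) - b₀ * exp (-t₀)|
      = |(fieldB A₁ A₂ (logChart p) - b₀) * exp (-p.2) + b₀ * (exp (-p.2) - exp (-t₀))| := by
        ring_nf
    _ ≤ |fieldB A₁ A₂ (logChart p) - b₀| * exp (-p.2) + |b₀| * |exp (-p.2) - exp (-t₀)| := by
        refine (abs_add_le _ _).trans_eq ?_
        rw [abs_mul, abs_mul, abs_of_pos (exp_pos (-p.2))]
    _ ≤ (|b₀| + 1) * (ε₀ * (exp (C₀ * (a + 1)) - 1)) * (2 * exp (-t₀)) +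
          (|b₀| + 1) * (ε₀ * exp (-t₀)) := by
        have hfield := hH2.abs_fieldB_logChart_sub_le hB hε₀ hp
        gcongr
        · exact (abs_nonneg _).trans hfield
        · exact hfield
        · exact exp_neg_le_of_mem_Krect hε₀ hp
        · linarith
        · exact abs_exp_neg_sub_exp_neg_le_of_mem_Krect hε₀ hp
    _ = 2 * exp (C₀ * (a + 1)) * ε₀ * exp (-t₀) * (|b₀| + 1) -
          (|b₀| + 1) * (ε₀ * exp (-t₀)) := by ring
    _ ≤ 2 * exp (C₀ * (a + 1)) * ε₀ * exp (-t₀) * (|b₀| + 1) :=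
        sub_le_self _ (by positivity)

lemma Atil_sub_Azero_eq_neg_integral (hB : ContinuousOn (fieldB A₁ A₂) UHP) (t₀ b₀ : ℝ)
    (p : ℝ × ℝ) :
    Atil A₁ A₂ t₀ p - Azero t₀ b₀ p =
      -∫ τ in t₀..p.2, (fieldB A₁ A₂ (logChart (p.1, τ)) * exp (-τ) - b₀ * exp (-t₀)) := by
  have hcont : Continuous fun τ ↦ fieldB A₁ A₂ (logChart (p.1, τ)) * exp (-τ) :=
    (hB.comp_continuous (continuous_logChart.comp (by fun_prop))
      fun τ ↦ logChart_mem_UHP (p.1, τ)).mul (by fun_prop)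
  rw [intervalIntegral.integral_sub (hcont.intervalIntegrable _ _) intervalIntegrable_const,
    intervalIntegral.integral_const, smul_eq_mul, Atil_eq_neg_integral_comp_logChart hB, Azero]
  ring

theorem potential_comparison_general (hH2 : H2 C₀ A₁ A₂)
    (hB : DifferentiableOn ℝ (fieldB A₁ A₂) UHP) (hε₀ : ε₀ ≤ 1) (hp : p ∈ Krect x₀ t₀ a ε₀) :
    |Atil A₁ A₂ t₀ p - Azero t₀ (fieldB A₁ A₂ (x₀, exp t₀)) p| ≤
      exp (C₀ * (a + 1)) * ε₀ ^ 2 * exp (-t₀) * (intenB A₁ A₂ (x₀, exp t₀) + 1) := by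
  set b₀ := fieldB A₁ A₂ (x₀, exp t₀)
  change _ ≤ exp (C₀ * (a + 1)) * ε₀ ^ 2 * exp (-t₀) * (|b₀| + 1)
  have hε₀_pos := epsilon_pos_of_mem_Krect hp
  have hmem : ∀ τ ∈ Set.uIoc t₀ p.2, (p.1, τ) ∈ Krect x₀ t₀ a ε₀ := fun τ hτ ↦
    ⟨hp.1, Set.ordConnected_Ioo.uIcc_subset (center_mem_Krect hp).2 hp.2
      (Set.uIoc_subset_uIcc hτ)⟩
  rw [Atil_sub_Azero_eq_neg_integral hB.continuousOn, abs_neg]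
  calc |∫ τ in t₀..p.2, (fieldB A₁ A₂ (logChart (p.1, τ)) * exp (-τ) - b₀ * exp (-t₀))|
      ≤ 2 * exp (C₀ * (a + 1)) * ε₀ * exp (-t₀) * (|b₀| + 1) * |p.2 - t₀| := by
        rw [← Real.norm_eq_abs]
        exact intervalIntegral.norm_integral_le_of_norm_le_const fun τ hτ ↦
          hH2.abs_fieldB_logChart_mul_exp_neg_sub_le hB hε₀ (hmem τ hτ)
    _ ≤ 2 * exp (C₀ * (a + 1)) * ε₀ * exp (-t₀) * (|b₀| + 1) * (ε₀ / 2) := by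
        gcongr
        exact (mem_Krect_iff.1 hp).2.le
    _ = exp (C₀ * (a + 1)) * ε₀ ^ 2 * exp (-t₀) * (|b₀| + 1) := by ring

end Field

/-- comparison of the gauge-transformed potential `Ã₁` with the frozen
linear potential `A₁⁰` on the rectangle `K`. -/
theorem potential_comparison
    (C₀ : ℝ) (hC₀ : 0 < C₀) (a₀ : ℝ) (ha₀ : 1 < a₀) :
    ∃ C > 0, ∀ A₁ A₂ : ℝ × ℝ → ℝ, ContDiffOn ℝ 2 A₁ UHP → ContDiffOn ℝ 2 A₂ UHP →
      H2 C₀ A₁ A₂ →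
      ∀ a : ℝ, 1 / a₀ < a → a ≤ a₀ → ∀ ε₀ : ℝ, 0 < ε₀ → ε₀ < 1 →
      ∀ x₀ t₀ : ℝ, 1 < intenB A₁ A₂ (x₀, Real.exp t₀) →
      ∀ p ∈ Krect x₀ t₀ a ε₀,
        |Atil A₁ A₂ t₀ p - Azero t₀ (fieldB A₁ A₂ (x₀, Real.exp t₀)) p| ≤
          C * ε₀ ^ 2 * Real.exp (-t₀) * intenB A₁ A₂ (x₀, Real.exp t₀) := by
  refine ⟨2 * exp (C₀ * (a₀ + 1)), by positivity, ?_⟩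
  intro A₁ A₂ hA₁ hA₂ hH2 a _ ha ε₀ _ hε₀ x₀ t₀ hb p hp
  have hB := (contDiffOn_fieldB (n := 1) hA₁ hA₂).differentiableOn one_ne_zero
  calc _ ≤ exp (C₀ * (a + 1)) * ε₀ ^ 2 * exp (-t₀) * (intenB A₁ A₂ (x₀, exp t₀) + 1) :=
        potential_comparison_general hH2 hB hε₀.le hp
    _ ≤ exp (C₀ * (a₀ + 1)) * ε₀ ^ 2 * exp (-t₀) * (2 * intenB A₁ A₂ (x₀, exp t₀)) := by
        gcongr
        linarith
    _ = 2 * exp (C₀ * (a₀ + 1)) * ε₀ ^ 2 * exp (-t₀) * intenB A₁ A₂ (x₀, exp t₀) := by ring
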